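/- Let k be a field, B = k[x,y,z,w], S = k[xz, yz, xw, yw] ⊆ B, I := xS + yS and J := zS + wS. Then the set A' of all 2×2 matrices over B with entry pattern [[S, I],[J, S]] (i.e., diagonal entries in S, (1,2) entry in I, (2,1) entry in J) is a unital k-subalgebra of M₂(B), and the k-algebra homomorphism A' → End_S(S ⊕ J) sending a matrix to its action on column vectors (with first entry in S and second entry in J) is an isomorphism; in particular A' ≅ End_S(S ⊕ J). -/

import Mathlib

open MvPolynomial

set_option synthInstance.maxHeartbeats 1000000
set_option maxHeartbeats 1000000

noncomputable section

/-- `S = k[xz, yz, xw, yw] ⊆ B = k[x,y,z,w]`, where `x = X 0`, `y = X 1`, `z = X 2`,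
`w = X 3`. -/
def quadS (k : Type*) [Field k] : Subalgebra k (MvPolynomial (Fin 4) k) :=
  Algebra.adjoin k ({X 0 * X 2, X 1 * X 2, X 0 * X 3, X 1 * X 3} : Set (MvPolynomial (Fin 4) k))

/-- `I = xS + yS` as an `S`-submodule of `B`. -/
def Imod (k : Type*) [Field k] : Submodule ↥(quadS k) (MvPolynomial (Fin 4) k) :=
  Submodule.span ↥(quadS k) ({X 0, X 1} : Set (MvPolynomial (Fin 4) k))

/-- `J = zS + wS` as an `S`-submodule of `B`. -/
def Jmod (k : Type*) [Field k] : Submodule ↥(quadS k) (MvPolynomial (Fin 4) k) :=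
  Submodule.span ↥(quadS k) ({X 2, X 3} : Set (MvPolynomial (Fin 4) k))

/-- The set of `2 × 2` matrices over `B` with entry pattern `[[S, I], [J, S]]`. -/
def A2set (k : Type*) [Field k] : Set (Matrix (Fin 2) (Fin 2) (MvPolynomial (Fin 4) k)) :=
  {M | M 0 0 ∈ quadS k ∧ M 0 1 ∈ Imod k ∧ M 1 0 ∈ Jmod k ∧ M 1 1 ∈ quadS k}

/-- The set of column vectors with first entry in `S` and second entry in `J`,
realizing `S ⊕ J` inside `B²`. -/
def SJset (k : Type*) [Field k] : Set (Fin 2 → MvPolynomial (Fin 4) k) :=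
  {v | v 0 ∈ quadS k ∧ v 1 ∈ Jmod k}

/-- The weights `deg x = deg y = 1`, `deg z = deg w = -1`. -/
def quadWeight : Fin 4 → ℤ := ![1, 1, -1, -1]

lemma weight_quadWeight (d : Fin 4 →₀ ℕ) :
    Finsupp.weight quadWeight d = (d 0 : ℤ) + d 1 - d 2 - d 3 := by
  rw [Finsupp.weight_apply, Finsupp.sum_fintype _ _ (by simp)]
  simp [Fin.sum_univ_four, quadWeight]
  ring

section

variable {k : Type*} [Field k]

lemma X_pow_mem_quadS (n a b c d : ℕ) (hab : a + b = n) (hcd : c + d = n) :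
    (X 0 ^ a * X 1 ^ b * (X 2 ^ c * X 3 ^ d) : MvPolynomial (Fin 4) k) ∈ quadS k := by
  have gen : ∀ p ∈ ({X 0 * X 2, X 1 * X 2, X 0 * X 3, X 1 * X 3} :
      Set (MvPolynomial (Fin 4) k)), p ∈ quadS k := fun p hp => Algebra.subset_adjoin hp
  induction n generalizing a b c d with
  | zero =>
    obtain ⟨rfl, rfl⟩ : a = 0 ∧ b = 0 := by omega
    obtain ⟨rfl, rfl⟩ : c = 0 ∧ d = 0 := by omega
    simp [one_mem]
  | succ n ih =>
    rcases a with _ | a <;> rcases c with _ | c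
    · obtain ⟨b, rfl⟩ : ∃ b', b = b' + 1 := ⟨b - 1, by omega⟩
      obtain ⟨d, rfl⟩ : ∃ d', d = d' + 1 := ⟨d - 1, by omega⟩
      convert mul_mem (gen (X 1 * X 3) (by simp)) (ih 0 b 0 d (by omega) (by omega)) using 1
      ring
    · obtain ⟨b, rfl⟩ : ∃ b', b = b' + 1 := ⟨b - 1, by omega⟩
      convert mul_mem (gen (X 1 * X 2) (by simp)) (ih 0 b c d (by omega) (by omega)) using 1
      ring
    · obtain ⟨d, rfl⟩ : ∃ d', d = d' + 1 := ⟨d - 1, by omega⟩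
      convert mul_mem (gen (X 0 * X 3) (by simp)) (ih a b 0 d (by omega) (by omega)) using 1
      ring
    · convert mul_mem (gen (X 0 * X 2) (by simp)) (ih a b c d (by omega) (by omega)) using 1
      ring

lemma mul_mem_of_mem_quadS {N : Submodule ↥(quadS k) (MvPolynomial (Fin 4) k)}
    {s p : MvPolynomial (Fin 4) k} (hs : s ∈ quadS k) (hp : p ∈ N) : s * p ∈ N :=
  N.smul_mem ⟨s, hs⟩ hp

lemma mem_of_isWeightedHomogeneous {n : ℤ}
    {N : Submodule ↥(quadS k) (MvPolynomial (Fin 4) k)} {p : MvPolynomial (Fin 4) k}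
    (hp : IsWeightedHomogeneous quadWeight p n)
    (hN : ∀ a b c d : ℕ, (a : ℤ) + b - c - d = n →
      (X 0 ^ a * X 1 ^ b * (X 2 ^ c * X 3 ^ d) : MvPolynomial (Fin 4) k) ∈ N) :
    p ∈ N := by
  rw [← support_sum_monomial_coeff p]
  refine Submodule.sum_mem _ fun d hd => ?_
  have h := hN (d 0) (d 1) (d 2) (d 3) (by
    rw [← weight_quadWeight]; exact hp (mem_support_iff.mp hd))
  have := N.smul_mem (algebraMap k ↥(quadS k) (coeff d p)) h
  convert this using 1
  rw [monomial_eq, Finsupp.prod_fintype _ _ (by simp), Fin.prod_univ_four]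
  simp only [Subalgebra.smul_def, Subalgebra.coe_algebraMap, smul_eq_mul, algebraMap_eq]
  ring

lemma isWeightedHomogeneous_of_mem_quadS {p : MvPolynomial (Fin 4) k} (hp : p ∈ quadS k) :
    IsWeightedHomogeneous quadWeight p 0 := by
  induction hp using Algebra.adjoin_induction with
  | mem p hp =>
    have hX := isWeightedHomogeneous_X k quadWeight
    rcases hp with rfl | rfl | rfl | rfl
    · exact (hX 0).mul (hX 2)
    · exact (hX 1).mul (hX 2)
    · exact (hX 0).mul (hX 3)
    · exact (hX 1).mul (hX 3)
  | algebraMap r => exact isWeightedHomogeneous_C quadWeight r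
  | add p q _ _ hp hq => exact hp.add hq
  | mul p q _ _ hp hq => simpa using hp.mul hq

lemma mem_quadS_iff {p : MvPolynomial (Fin 4) k} :
    p ∈ quadS k ↔ IsWeightedHomogeneous quadWeight p 0 := by
  refine ⟨isWeightedHomogeneous_of_mem_quadS, fun hp => ?_⟩
  have h : p ∈ (1 : Submodule ↥(quadS k) (MvPolynomial (Fin 4) k)) :=
    mem_of_isWeightedHomogeneous hp fun a b c d h =>
      Submodule.mem_one.mpr ⟨⟨_, X_pow_mem_quadS (a + b) a b c d rfl (by omega)⟩, rfl⟩
  obtain ⟨s, rfl⟩ := Submodule.mem_one.mp h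
  exact s.2

lemma isWeightedHomogeneous_of_mem_span_pair {i j : Fin 4} {n : ℤ}
    (hi : quadWeight i = n) (hj : quadWeight j = n) {p : MvPolynomial (Fin 4) k}
    (hp : p ∈ Submodule.span ↥(quadS k) ({X i, X j} : Set (MvPolynomial (Fin 4) k))) :
    IsWeightedHomogeneous quadWeight p n := by
  obtain ⟨s, t, rfl⟩ := Submodule.mem_span_pair.mp hp
  have hs := (mem_quadS_iff.mp s.2).mul (hi ▸ isWeightedHomogeneous_X k quadWeight i)
  have ht := (mem_quadS_iff.mp t.2).mul (hj ▸ isWeightedHomogeneous_X k quadWeight j)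
  rw [zero_add] at hs ht
  exact hs.add ht

lemma mem_Imod_iff {p : MvPolynomial (Fin 4) k} :
    p ∈ Imod k ↔ IsWeightedHomogeneous quadWeight p 1 := by
  refine ⟨isWeightedHomogeneous_of_mem_span_pair (i := 0) (j := 1) rfl rfl, fun hp =>
    mem_of_isWeightedHomogeneous hp fun a b c d h => ?_⟩
  rcases a with _ | a
  · obtain ⟨b, rfl⟩ : ∃ b', b = b' + 1 := ⟨b - 1, by omega⟩
    rw [show (X 0 ^ 0 * X 1 ^ (b + 1) * (X 2 ^ c * X 3 ^ d) : MvPolynomial (Fin 4) k) =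
      X 0 ^ 0 * X 1 ^ b * (X 2 ^ c * X 3 ^ d) * X 1 by ring]
    exact mul_mem_of_mem_quadS (X_pow_mem_quadS b 0 b c d (by omega) (by omega))
      (Submodule.subset_span (by simp))
  · rw [show (X 0 ^ (a + 1) * X 1 ^ b * (X 2 ^ c * X 3 ^ d) : MvPolynomial (Fin 4) k) =
      X 0 ^ a * X 1 ^ b * (X 2 ^ c * X 3 ^ d) * X 0 by ring]
    exact mul_mem_of_mem_quadS (X_pow_mem_quadS (a + b) a b c d rfl (by omega))
      (Submodule.subset_span (by simp))

lemma X_two_mem_Jmod : (X 2 : MvPolynomial (Fin 4) k) ∈ Jmod k :=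
  Submodule.subset_span (by simp)

lemma X_three_mem_Jmod : (X 3 : MvPolynomial (Fin 4) k) ∈ Jmod k :=
  Submodule.subset_span (by simp)

lemma mem_Jmod_iff {p : MvPolynomial (Fin 4) k} :
    p ∈ Jmod k ↔ IsWeightedHomogeneous quadWeight p (-1) := by
  refine ⟨isWeightedHomogeneous_of_mem_span_pair (i := 2) (j := 3) rfl rfl, fun hp =>
    mem_of_isWeightedHomogeneous hp fun a b c d h => ?_⟩
  rcases c with _ | c
  · obtain ⟨d, rfl⟩ : ∃ d', d = d' + 1 := ⟨d - 1, by omega⟩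
    rw [show (X 0 ^ a * X 1 ^ b * (X 2 ^ 0 * X 3 ^ (d + 1)) : MvPolynomial (Fin 4) k) =
      X 0 ^ a * X 1 ^ b * (X 2 ^ 0 * X 3 ^ d) * X 3 by ring]
    exact mul_mem_of_mem_quadS (X_pow_mem_quadS d a b 0 d (by omega) (by omega))
      X_three_mem_Jmod
  · rw [show (X 0 ^ a * X 1 ^ b * (X 2 ^ (c + 1) * X 3 ^ d) : MvPolynomial (Fin 4) k) =
      X 0 ^ a * X 1 ^ b * (X 2 ^ c * X 3 ^ d) * X 2 by ring]
    exact mul_mem_of_mem_quadS (X_pow_mem_quadS (a + b) a b c d rfl (by omega))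
      X_two_mem_Jmod

lemma isWeightedHomogeneous_of_X_two_mul {q : MvPolynomial (Fin 4) k} {m n : ℤ}
    (h : IsWeightedHomogeneous quadWeight (X 2 * q) m) (hmn : m + 1 = n) :
    IsWeightedHomogeneous quadWeight q n := by
  intro d hd
  rw [← coeff_X_mul d 2 q] at hd
  have h' := h hd
  rw [map_add, Finsupp.weight_single, one_smul] at h'
  have h2 : quadWeight 2 = -1 := rfl
  omega

lemma exists_eq_X_two_mul_and_eq_X_three_mul {b c : MvPolynomial (Fin 4) k}
    (h : X 0 * X 3 * b = X 0 * X 2 * c) : ∃ q, b = X 2 * q ∧ c = X 3 * q := by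
  have h1 : X 3 * b = X 2 * c :=
    mul_left_cancel₀ (X_ne_zero (0 : Fin 4)) (by simpa only [mul_assoc] using h)
  have hdvd : (X 2 : MvPolynomial (Fin 4) k) ∣ X 3 * b := ⟨c, h1⟩
  rcases (X_prime (R := k) (i := (2 : Fin 4))).dvd_or_dvd hdvd with h2 | ⟨q, rfl⟩
  · rw [X_dvd_X] at h2
    exact absurd h2 (by decide)
  · refine ⟨q, rfl, mul_left_cancel₀ (X_ne_zero (2 : Fin 4)) ?_⟩
    rw [← h1]
    ring

lemma mul_mem_A2set {M N : Matrix (Fin 2) (Fin 2) (MvPolynomial (Fin 4) k)}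
    (hM : M ∈ A2set k) (hN : N ∈ A2set k) : M * N ∈ A2set k := by
  simp only [A2set, Set.mem_ofPred_eq, mem_quadS_iff, mem_Imod_iff, mem_Jmod_iff,
    Matrix.mul_apply, Fin.sum_univ_two] at hM hN ⊢
  obtain ⟨a, b, c, d⟩ := hM
  obtain ⟨a', b', c', d'⟩ := hN
  exact ⟨(a.mul a').add (b.mul c'), (a.mul b').add (b.mul d'),
    (c.mul a').add (d.mul c'), (c.mul b').add (d.mul d')⟩

lemma mulVec_mem_SJset {M : Matrix (Fin 2) (Fin 2) (MvPolynomial (Fin 4) k)}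
    {v : Fin 2 → MvPolynomial (Fin 4) k} (hM : M ∈ A2set k) (hv : v ∈ SJset k) :
    M.mulVec v ∈ SJset k := by
  simp only [A2set, SJset, Set.mem_ofPred_eq, mem_quadS_iff, mem_Imod_iff, mem_Jmod_iff,
    Matrix.mulVec, dotProduct, Fin.sum_univ_two] at hM hv ⊢
  obtain ⟨a, b, c, d⟩ := hM
  obtain ⟨u, v⟩ := hv
  exact ⟨(a.mul u).add (b.mul v), (c.mul u).add (d.mul v)⟩

variable (k) in
/-- The set `A2set k` as a unital `k`-subalgebra of `M₂(B)`. -/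
def A2subalgebra : Subalgebra k (Matrix (Fin 2) (Fin 2) (MvPolynomial (Fin 4) k)) where
  carrier := A2set k
  mul_mem' := mul_mem_A2set
  add_mem' := fun ⟨a, b, c, d⟩ ⟨a', b', c', d'⟩ =>
    ⟨add_mem a a', add_mem b b', add_mem c c', add_mem d d'⟩
  algebraMap_mem' r := by
    simp only [A2set, Set.mem_ofPred_eq, Matrix.algebraMap_matrix_apply]
    exact ⟨algebraMap_mem _ r, zero_mem _, zero_mem _, algebraMap_mem _ r⟩

variable {𝒜 : Subalgebra k (Matrix (Fin 2) (Fin 2) (MvPolynomial (Fin 4) k))}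
  (h𝒜 : (𝒜 : Set (Matrix (Fin 2) (Fin 2) (MvPolynomial (Fin 4) k))) = A2set k)
  {P : Submodule ↥(quadS k) (Fin 2 → MvPolynomial (Fin 4) k)}
  (hP : (P : Set (Fin 2 → MvPolynomial (Fin 4) k)) = SJset k)

lemma mem_iff_mem_SJset (hP : (P : Set (Fin 2 → MvPolynomial (Fin 4) k)) = SJset k)
    (v : Fin 2 → MvPolynomial (Fin 4) k) : v ∈ P ↔ v ∈ SJset k := by
  rw [← hP, SetLike.mem_coe]

/-- The action of the matrices with entry pattern `[[S, I], [J, S]]` on `S ⊕ J`. -/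
def matrixAction : ↥𝒜 →ₐ[k] Module.End ↥(quadS k) ↥P where
  toFun M :=
    { toFun := fun v => ⟨(M : Matrix (Fin 2) (Fin 2) (MvPolynomial (Fin 4) k)).mulVec v,
        (mem_iff_mem_SJset hP _).mpr (mulVec_mem_SJset (h𝒜 ▸ M.2)
          ((mem_iff_mem_SJset hP _).mp v.2))⟩
      map_add' := fun u v => Subtype.ext
        (Matrix.mulVec_add (M : Matrix (Fin 2) (Fin 2) (MvPolynomial (Fin 4) k))
          (u : Fin 2 → MvPolynomial (Fin 4) k) v)
      map_smul' := fun s v => Subtype.ext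
        (Matrix.mulVec_smul (M : Matrix (Fin 2) (Fin 2) (MvPolynomial (Fin 4) k)) s
          (v : Fin 2 → MvPolynomial (Fin 4) k)) }
  map_one' := LinearMap.ext fun v => Subtype.ext
    (Matrix.one_mulVec (v : Fin 2 → MvPolynomial (Fin 4) k))
  map_mul' M N := LinearMap.ext fun v => Subtype.ext
    (Matrix.mulVec_mulVec (v : Fin 2 → MvPolynomial (Fin 4) k)
      (M : Matrix (Fin 2) (Fin 2) (MvPolynomial (Fin 4) k)) N).symm
  map_zero' := LinearMap.ext fun v => Subtype.ext
    (Matrix.zero_mulVec (v : Fin 2 → MvPolynomial (Fin 4) k))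
  map_add' M N := LinearMap.ext fun v => Subtype.ext
    (Matrix.add_mulVec (M : Matrix (Fin 2) (Fin 2) (MvPolynomial (Fin 4) k)) N v)
  commutes' r := LinearMap.ext fun v => Subtype.ext (by
    change (algebraMap k (Matrix (Fin 2) (Fin 2) (MvPolynomial (Fin 4) k)) r).mulVec _ =
      r • (v : Fin 2 → MvPolynomial (Fin 4) k)
    rw [Algebra.algebraMap_eq_smul_one, Matrix.smul_mulVec, Matrix.one_mulVec])

lemma coe_matrixAction_apply (M : ↥𝒜) (v : ↥P) :
    (matrixAction h𝒜 hP M v : Fin 2 → MvPolynomial (Fin 4) k) =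
      (M : Matrix (Fin 2) (Fin 2) (MvPolynomial (Fin 4) k)).mulVec v := rfl

lemma vec_one_zero_mem_SJset : ![1, 0] ∈ SJset k := ⟨one_mem _, zero_mem _⟩

lemma vec_zero_X_two_mem_SJset : ![0, X 2] ∈ SJset k := ⟨zero_mem _, X_two_mem_Jmod⟩

lemma vec_zero_X_three_mem_SJset : ![0, X 3] ∈ SJset k := ⟨zero_mem _, X_three_mem_Jmod⟩

lemma matrixAction_injective : Function.Injective (matrixAction h𝒜 hP) := by
  refine (injective_iff_map_eq_zero _).mpr fun M hM => Subtype.ext ?_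
  have key : ∀ v ∈ SJset k,
      (M : Matrix (Fin 2) (Fin 2) (MvPolynomial (Fin 4) k)).mulVec v = 0 := fun v hv => by
    rw [← mem_iff_mem_SJset hP] at hv
    rw [← coe_matrixAction_apply h𝒜 hP M ⟨v, hv⟩, hM]
    rfl
  have h1 := key _ vec_one_zero_mem_SJset
  have h2 := key _ vec_zero_X_two_mem_SJset
  ext1 i j
  have h1 := congrFun h1 i
  have h2 := congrFun h2 i
  simp only [Matrix.mulVec, dotProduct, Fin.sum_univ_two, Matrix.cons_val_zero,
    Matrix.cons_val_one, mul_one, mul_zero, zero_add, add_zero, Pi.zero_apply, mul_eq_zero,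
    X_ne_zero, or_false] at h1 h2
  fin_cases j
  · exact h1
  · exact h2

lemma matrixAction_surjective : Function.Surjective (matrixAction h𝒜 hP) := by
  intro f
  have mem := fun v => mem_iff_mem_SJset hP v
  let e : ↥P := ⟨![1, 0], (mem _).mpr vec_one_zero_mem_SJset⟩
  let ez : ↥P := ⟨![0, X 2], (mem _).mpr vec_zero_X_two_mem_SJset⟩
  let ew : ↥P := ⟨![0, X 3], (mem _).mpr vec_zero_X_three_mem_SJset⟩
  let xz : ↥(quadS k) := ⟨X 0 * X 2, Algebra.subset_adjoin (by simp)⟩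
  let xw : ↥(quadS k) := ⟨X 0 * X 3, Algebra.subset_adjoin (by simp)⟩
  have rel : xw • ez = xz • ew := by
    refine Subtype.ext (funext fun i => ?_)
    fin_cases i
    · change X 0 * X 3 * 0 = X 0 * X 2 * (0 : MvPolynomial (Fin 4) k)
      simp
    · change X 0 * X 3 * X 2 = X 0 * X 2 * (X 3 : MvPolynomial (Fin 4) k)
      ring
  have rel' : xw • f ez = xz • f ew := by rw [← map_smul, rel, map_smul]
  have quot : ∀ i, ∃ q, (f ez : Fin 2 → MvPolynomial (Fin 4) k) i = X 2 * q ∧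
      (f ew : Fin 2 → MvPolynomial (Fin 4) k) i = X 3 * q := fun i =>
    exists_eq_X_two_mul_and_eq_X_three_mul (congrFun (congrArg Subtype.val rel') i)
  choose q hqz hqw using quot
  have hfe := (mem _).mp (f e).2
  have hfz := (mem _).mp (f ez).2
  let M : Matrix (Fin 2) (Fin 2) (MvPolynomial (Fin 4) k) :=
    Matrix.of fun i => ![(f e : Fin 2 → MvPolynomial (Fin 4) k) i, q i]
  have hM : M ∈ A2set k := by
    refine ⟨hfe.1, mem_Imod_iff.mpr ?_, hfe.2, mem_quadS_iff.mpr ?_⟩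
    · refine isWeightedHomogeneous_of_X_two_mul (m := 0) ?_ (by norm_num)
      change IsWeightedHomogeneous quadWeight (X 2 * q 0) 0
      rw [← hqz]
      exact mem_quadS_iff.mp hfz.1
    · refine isWeightedHomogeneous_of_X_two_mul (m := -1) ?_ (by norm_num)
      change IsWeightedHomogeneous quadWeight (X 2 * q 1) (-1)
      rw [← hqz]
      exact mem_Jmod_iff.mp hfz.2
  refine ⟨⟨M, by rw [← SetLike.mem_coe, h𝒜]; exact hM⟩, LinearMap.ext fun v => ?_⟩
  obtain ⟨hv0, hv1⟩ := (mem _).mp v.2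
  obtain ⟨s, t, hst⟩ := Submodule.mem_span_pair.mp hv1
  have hst' : s.1 * X 2 + t.1 * X 3 = v.1 1 := hst
  have hv : v = (⟨v.1 0, hv0⟩ : ↥(quadS k)) • e + s • ez + t • ew := by
    refine Subtype.ext (funext fun i => ?_)
    fin_cases i
    · change v.1 0 = v.1 0 * 1 + s.1 * 0 + t.1 * 0
      ring
    · change v.1 1 = v.1 0 * 0 + s.1 * X 2 + t.1 * X 3
      rw [← hst']
      ring
  have hf : f v = (⟨v.1 0, hv0⟩ : ↥(quadS k)) • f e + s • f ez + t • f ew := by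
    conv_lhs => rw [hv]
    simp only [map_add, map_smul]
  refine Subtype.ext (funext fun i => ?_)
  rw [hf, coe_matrixAction_apply]
  change M.mulVec v.1 i = v.1 0 * (f e).1 i + s.1 * (f ez).1 i + t.1 * (f ew).1 i
  rw [hqz, hqw]
  simp only [M, Matrix.mulVec, dotProduct, Fin.sum_univ_two, Matrix.of_apply,
    Matrix.cons_val_zero, Matrix.cons_val_one]
  rw [← hst']
  ring

end

/-- the set `A'` of `2 × 2` matrices over `B` with entry pattern
`[[S, I], [J, S]]` is a unital `k`-subalgebra of `M₂(B)`, and the `k`-algebra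
homomorphism `A' → End_S(S ⊕ J)` sending a matrix to its action on column vectors
(with first entry in `S` and second entry in `J`) is an isomorphism. -/
theorem A2_subalgebra_iso_End (k : Type*) [Field k] :
    (∃ 𝒜 : Subalgebra k (Matrix (Fin 2) (Fin 2) (MvPolynomial (Fin 4) k)),
      (𝒜 : Set (Matrix (Fin 2) (Fin 2) (MvPolynomial (Fin 4) k))) = A2set k) ∧
    ∀ (𝒜 : Subalgebra k (Matrix (Fin 2) (Fin 2) (MvPolynomial (Fin 4) k))),
      (𝒜 : Set (Matrix (Fin 2) (Fin 2) (MvPolynomial (Fin 4) k))) = A2set k →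
      ∀ (P : Submodule ↥(quadS k) (Fin 2 → MvPolynomial (Fin 4) k)),
        (P : Set (Fin 2 → MvPolynomial (Fin 4) k)) = SJset k →
        ∃ Φ : ↥𝒜 ≃ₐ[k] Module.End ↥(quadS k) ↥P,
          ∀ (M : ↥𝒜) (v : ↥P),
            ((Φ M v : Fin 2 → MvPolynomial (Fin 4) k))
              = (M : Matrix (Fin 2) (Fin 2) (MvPolynomial (Fin 4) k)).mulVec ↑v := by
  refine ⟨⟨A2subalgebra k, rfl⟩, fun 𝒜 h𝒜 P hP => ?_⟩
  exact ⟨AlgEquiv.ofBijective (matrixAction h𝒜 hP)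
    ⟨matrixAction_injective h𝒜 hP, matrixAction_surjective h𝒜 hP⟩, fun M v => rfl⟩
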